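/- (Temporal Link Prediction Impossibility, core) Let (X, A) be an aggregated temporal graph on node type V (X : V → (Fin T → ℝ^p), A : V → V → (Fin T → ℝ^p)), and suppose σ is a permutation of V that is an automorphism of (X, A) (X(σ i) = X(i) and A(σ i)(σ j) = A(i)(j) for all i, j). Let i, j ∈ V and let Y : V → V → Bool be any target link labeling with Y(i)(j) ≠ Y(σ i)(σ j). Then for every permutation-equivariant node representation f : (V → (Fin T → ℝ^p)) × (V → V → (Fin T → ℝ^p)) → (V → γ) and every pairwise decoder s : γ → γ → Bool, the link predictor (u, w) ↦ s(f(X,A)(u), f(X,A)(w)) makes an error on at least one of the pairs (i, j) and (σ i, σ j); hence no equivariant temporal node representation followed by a pairwise readout can correctly predict such temporal links. -/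

import Mathlib

/-!
An automorphism of a graph is a fixed point of relabeling, and an equivariant representation carries
fixed points to fixed points. The representation is therefore constant along the automorphism, so a
pairwise readout cannot tell a link from its image, although their target labels differ.
-/

/-- A graph on `V` with an `α`-valued attribute at each node and a `β`-valued one at each ordered
pair of nodes. An aggregated temporal graph over `T` time steps with attribute dimension `p` has
`α = β = (Fin T → Fin p → ℝ)`. -/
abbrev AttributedGraph (V α β : Type*) := (V → α) × (V → V → β)

namespace AttributedGraph

variable {V α β γ L : Type*}

/-- The pullback of the attributes of a graph along a self-map `σ` of its nodes. The automorphisms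
of `G` are the permutations `σ` for which `G` is a fixed point of `relabel σ`, and a representation
`f` is permutation-equivariant if it semiconjugates `relabel σ` to precomposition with `σ` for every
permutation `σ`. -/
def relabel (σ : V → V) (G : AttributedGraph V α β) : AttributedGraph V α β :=
  (G.1 ∘ σ, fun i j => G.2 (σ i) (σ j))

theorem isFixedPt_relabel_iff {σ : V → V} {G : AttributedGraph V α β} :
    Function.IsFixedPt (relabel σ) G ↔
      (∀ i, G.1 (σ i) = G.1 i) ∧ ∀ i j, G.2 (σ i) (σ j) = G.2 i j := by
  simp only [Function.IsFixedPt, relabel, Prod.ext_iff, funext_iff, Function.comp_apply]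

/-- The link predictor built from a node representation `f` and a pairwise decoder `s`, with
predictions in an arbitrary type `L` of link labels. -/
def linkPredictor (f : AttributedGraph V α β → V → γ) (s : γ → γ → L)
    (G : AttributedGraph V α β) (u w : V) : L :=
  s (f G u) (f G w)

variable {σ : V → V} {G : AttributedGraph V α β} {f : AttributedGraph V α β → V → γ}

theorem representation_apply_map (hσ : Function.IsFixedPt (relabel σ) G)
    (hf : Function.Semiconj f (relabel σ) (· ∘ σ)) (v : V) : f G (σ v) = f G v :=
  congrFun (hσ.map hf) v

theorem linkPredictor_map_map (hσ : Function.IsFixedPt (relabel σ) G)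
    (hf : Function.Semiconj f (relabel σ) (· ∘ σ)) (s : γ → γ → L) (i j : V) :
    linkPredictor f s G (σ i) (σ j) = linkPredictor f s G i j :=
  congrArg₂ s (representation_apply_map hσ hf i) (representation_apply_map hσ hf j)

end AttributedGraph

open AttributedGraph in
theorem temporal_link_prediction_impossibility_general {V α β γ L : Type*} {σ : V → V}
    {G : AttributedGraph V α β} (hσ : Function.IsFixedPt (relabel σ) G)
    {f : AttributedGraph V α β → V → γ} (hf : Function.Semiconj f (relabel σ) (· ∘ σ))
    (s : γ → γ → L) {Y : V → V → L} {i j : V} (hY : Y i j ≠ Y (σ i) (σ j)) :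
    linkPredictor f s G i j ≠ Y i j ∨
      linkPredictor f s G (σ i) (σ j) ≠ Y (σ i) (σ j) := by
  rw [linkPredictor_map_map hσ hf]
  exact (hY.ne_or_ne _).imp Ne.symm Ne.symm

/-- (Temporal Link Prediction Impossibility, core) If `σ` is an automorphism of the
aggregated temporal graph `(X, A)` and `Y` is a link labeling with
`Y i j ≠ Y (σ i) (σ j)`, then any link predictor built as a pairwise readout `s` of
a permutation-equivariant node representation `f` errs on `(i, j)` or `(σ i, σ j)`. -/
theorem temporal_link_prediction_impossibility {V γ : Type*} {T p : ℕ}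
    (X : V → Fin T → Fin p → ℝ) (A : V → V → Fin T → Fin p → ℝ)
    (σ : Equiv.Perm V)
    (hX : ∀ i, X (σ i) = X i) (hA : ∀ i j, A (σ i) (σ j) = A i j)
    (i j : V) (Y : V → V → Bool) (hY : Y i j ≠ Y (σ i) (σ j))
    (f : (V → Fin T → Fin p → ℝ) × (V → V → Fin T → Fin p → ℝ) → (V → γ))
    (hequiv : ∀ (τ : Equiv.Perm V) (X' : V → Fin T → Fin p → ℝ)
        (A' : V → V → Fin T → Fin p → ℝ),
      f (X' ∘ τ, fun a b => A' (τ a) (τ b)) = (f (X', A')) ∘ τ)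
    (s : γ → γ → Bool) :
    s (f (X, A) i) (f (X, A) j) ≠ Y i j ∨
      s (f (X, A) (σ i)) (f (X, A) (σ j)) ≠ Y (σ i) (σ j) :=
  temporal_link_prediction_impossibility_general (G := (X, A))
    (AttributedGraph.isFixedPt_relabel_iff.2 ⟨hX, hA⟩) (fun G => hequiv σ G.1 G.2) s hY
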